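/- Let μ, ν be probability measures on ℝ^d and σ > 0, with γ_σ = N(0, σ²·I_d). Then the Kullback–Leibler divergence KL(μ ∗ γ_σ ‖ ν ∗ γ_σ) equals 0 if and only if μ = ν. -/

import Mathlib

open MeasureTheory Real
open scoped ENNReal Classical

/-- The isotropic centered Gaussian measure `N(0, σ²·I_d)` on `ℝ^d`, given by its
density `(2πσ²)^(-d/2) · exp(-‖x‖²/(2σ²))` with respect to Lebesgue measure. -/
noncomputable def gaussianIso (d : ℕ) (σ : ℝ) : Measure (EuclideanSpace ℝ (Fin d)) :=
  volume.withDensity fun x =>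
    ENNReal.ofReal ((2 * π * σ ^ 2) ^ (-(d : ℝ) / 2) * Real.exp (-‖x‖ ^ 2 / (2 * σ ^ 2)))

/-- The Kullback–Leibler divergence `KL(P‖Q) = ∫ log (dP/dQ) dP` when `P ≪ Q`
(and the integral makes sense), and `+∞` otherwise. -/
noncomputable def KL {α : Type*} [MeasurableSpace α] (P Q : Measure α) : ℝ≥0∞ :=
  if P ≪ Q ∧ Integrable (fun x => Real.log (P.rnDeriv Q x).toReal) P then
    ENNReal.ofReal (∫ x, Real.log (P.rnDeriv Q x).toReal ∂P) else ⊤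

lemma gaussianIso_arg {d : ℕ} {σ : ℝ} (x : EuclideanSpace ℝ (Fin d)) :
    -‖x‖ ^ 2 / (2 * σ ^ 2) = -(2 * σ ^ 2)⁻¹ * ‖x‖ ^ 2 := by
  ring

lemma isProbabilityMeasure_gaussianIso (d : ℕ) {σ : ℝ} (hσ : 0 < σ) :
    IsProbabilityMeasure (gaussianIso d σ) := by
  have hb : 0 < (2 * σ ^ 2)⁻¹ := by positivity
  have hI := GaussianFourier.integral_rexp_neg_mul_sq_norm
    (V := EuclideanSpace ℝ (Fin d)) hb
  have hint : Integrable (fun v : EuclideanSpace ℝ (Fin d) =>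
      Real.exp (-(2 * σ ^ 2)⁻¹ * ‖v‖ ^ 2)) := by
    by_contra h
    rw [integral_undef h] at hI
    have : 0 < (π / (2 * σ ^ 2)⁻¹) ^
      ((Module.finrank ℝ (EuclideanSpace ℝ (Fin d)) : ℝ) / 2) := by positivity
    linarith
  constructor
  rw [gaussianIso, withDensity_apply _ MeasurableSet.univ, Measure.restrict_univ]
  simp_rw [gaussianIso_arg]
  rw [← ofReal_integral_eq_lintegral_ofReal (hint.const_mul _)
    (Filter.Eventually.of_forall fun x => by positivity), integral_const_mul, hI]
  have h2 : π / (2 * σ ^ 2)⁻¹ = 2 * π * σ ^ 2 := by field_simp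
  rw [h2, finrank_euclideanSpace_fin, ← Real.rpow_add (by positivity)]
  simp [neg_div]

lemma charFun_gaussianIso_ne_zero (d : ℕ) {σ : ℝ} (hσ : 0 < σ)
    (t : EuclideanSpace ℝ (Fin d)) : charFun (gaussianIso d σ) t ≠ 0 := by
  have hb : 0 < (2 * σ ^ 2)⁻¹ := by positivity
  have hI := GaussianFourier.integral_cexp_neg_mul_sq_norm_add
    (V := EuclideanSpace ℝ (Fin d)) (b := (((2 * σ ^ 2)⁻¹ : ℝ) : ℂ))
    (by rw [Complex.ofReal_re]; exact hb) Complex.I t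
  rw [charFun_apply, gaussianIso, integral_withDensity_eq_integral_toReal_smul (by fun_prop)
    (Filter.Eventually.of_forall fun x => ENNReal.ofReal_lt_top)]
  have key : ∀ x : EuclideanSpace ℝ (Fin d),
      (ENNReal.ofReal ((2 * π * σ ^ 2) ^ (-(d : ℝ) / 2) *
        Real.exp (-‖x‖ ^ 2 / (2 * σ ^ 2)))).toReal •
        Complex.exp ((inner ℝ x t : ℝ) * Complex.I) =
      (((2 * π * σ ^ 2) ^ (-(d : ℝ) / 2) : ℝ) : ℂ) *
        Complex.exp (-(((2 * σ ^ 2)⁻¹ : ℝ) : ℂ) * (‖x‖ : ℂ) ^ 2 +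
          Complex.I * (inner ℝ t x : ℝ)) := by
    intro x
    rw [ENNReal.toReal_ofReal (by positivity), gaussianIso_arg, Complex.real_smul,
      Complex.ofReal_mul, Complex.ofReal_exp, mul_assoc, ← Complex.exp_add, real_inner_comm]
    congr 2
    push_cast
    ring
  simp_rw [key]
  rw [integral_const_mul, hI]
  refine mul_ne_zero ?_ (mul_ne_zero ?_ (Complex.exp_ne_zero _))
  · rw [Complex.ofReal_ne_zero]
    positivity
  · rw [Complex.cpow_def_of_ne_zero]
    · exact Complex.exp_ne_zero _
    · rw [← Complex.ofReal_div, Complex.ofReal_ne_zero]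
      positivity

lemma KL_eq_klDiv {α : Type*} [MeasurableSpace α] (P Q : Measure α)
    [IsProbabilityMeasure P] [IsProbabilityMeasure Q] :
    KL P Q = InformationTheory.klDiv P Q := by
  rw [InformationTheory.klDiv_def, KL]
  simp [llr_def]

/-- Validity of the spread (single-kernel diffusive) KL divergence:
`KL(μ ∗ γ_σ ‖ ν ∗ γ_σ) = 0` iff `μ = ν`. -/
theorem spreadKL_eq_zero_iff {d : ℕ} {σ : ℝ} (hσ : 0 < σ)
    (μ ν : Measure (EuclideanSpace ℝ (Fin d)))
    [IsProbabilityMeasure μ] [IsProbabilityMeasure ν] :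
    KL (μ.conv (gaussianIso d σ)) (ν.conv (gaussianIso d σ)) = 0 ↔ μ = ν := by
  haveI := isProbabilityMeasure_gaussianIso d hσ
  rw [KL_eq_klDiv, InformationTheory.klDiv_eq_zero_iff]
  refine ⟨fun h => Measure.ext_of_charFun (funext fun t => ?_), fun h => by rw [h]⟩
  have ht := congrArg (fun m => charFun m t) h
  simp only [charFun_conv] at ht
  exact mul_right_cancel₀ (charFun_gaussianIso_ne_zero d hσ t) ht
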